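/- For every admissible curve γ(x) = (x, y(x), z(x)) in G¹₃, the fourth derivative of γ with respect to arclength satisfies γ''''(x) = ρ(x)⁻⁴·[(2𝒦(x)² + 𝒯(x)² − 𝒦°(x))·N(x) + (𝒯°(x) − 3𝒦(x)𝒯(x))·B(x)] for all x ∈ I, where f° = ρ·f' denotes differentiation with respect to the equiform parameter. -/

import Mathlib

noncomputable section

open Real

/-- Model of the pseudo-Galilean space `G¹₃` as `ℝ³`. -/
abbrev V3 := ℝ × ℝ × ℝ

/-- The pseudo-Galilean scalar product on `ℝ³`. -/
def pgInner (u v : V3) : ℝ :=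
  if u.1 ≠ 0 ∨ v.1 ≠ 0 then u.1 * v.1 else u.2.1 * v.2.1 - u.2.2 * v.2.2

/-- Curvature of the admissible curve `x ↦ (x, y x, z x)`. -/
def curv (y z : ℝ → ℝ) (x : ℝ) : ℝ :=
  Real.sqrt |(deriv (deriv y) x) ^ 2 - (deriv (deriv z) x) ^ 2|

/-- Torsion of the admissible curve `x ↦ (x, y x, z x)`. -/
def tors (y z : ℝ → ℝ) (x : ℝ) : ℝ :=
  (deriv (deriv y) x * deriv (deriv (deriv z)) x -
    deriv (deriv (deriv y)) x * deriv (deriv z) x) / (curv y z x) ^ 2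

/-- Radius of curvature `ρ = 1/κ`. -/
def rho (y z : ℝ → ℝ) (x : ℝ) : ℝ := 1 / curv y z x

/-- Equiform curvature `𝒦 = ρ'`. -/
def eqK (y z : ℝ → ℝ) (x : ℝ) : ℝ := deriv (rho y z) x

/-- Equiform torsion `𝒯 = ρ·τ`. -/
def eqT (y z : ℝ → ℝ) (x : ℝ) : ℝ := rho y z x * tors y z x

/-- Frenet tangent `e₁ = (1, y', z')`. -/
def e1 (y z : ℝ → ℝ) (x : ℝ) : V3 := (1, deriv y x, deriv z x)

/-- Frenet principal normal `e₂ = (1/κ)(0, y'', z'')`. -/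
def e2 (y z : ℝ → ℝ) (x : ℝ) : V3 :=
  (0, deriv (deriv y) x / curv y z x, deriv (deriv z) x / curv y z x)

/-- Frenet binormal `e₃ = (1/κ)(0, ε·z'', ε·y'')`. -/
def e3 (y z : ℝ → ℝ) (ε : ℝ) (x : ℝ) : V3 :=
  (0, ε * deriv (deriv z) x / curv y z x, ε * deriv (deriv y) x / curv y z x)

/-- Equiform tangent `T = ρ·e₁`. -/
def Tv (y z : ℝ → ℝ) (x : ℝ) : V3 := rho y z x • e1 y z x

/-- Equiform principal normal `N = ρ·e₂`. -/
def Nv (y z : ℝ → ℝ) (x : ℝ) : V3 := rho y z x • e2 y z x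

/-- Equiform binormal `B = ρ·e₃`. -/
def Bv (y z : ℝ → ℝ) (ε : ℝ) (x : ℝ) : V3 := rho y z x • e3 y z ε x

/-- Derivative with respect to the equiform parameter: `f° = ρ·f'`. -/
def eqD {E : Type*} [NormedAddCommGroup E] [NormedSpace ℝ E]
    (y z : ℝ → ℝ) (f : ℝ → E) (x : ℝ) : E := rho y z x • deriv f x

/-- `Q₁ = ρ⁻²·N`. -/
def Q1 (y z : ℝ → ℝ) (x : ℝ) : V3 := ((rho y z x) ^ (-2 : ℤ)) • Nv y z x

/-- `Q₂ = ρ⁻³·(−𝒦N + 𝒯B)`. -/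
def Q2 (y z : ℝ → ℝ) (ε : ℝ) (x : ℝ) : V3 :=
  ((rho y z x) ^ (-3 : ℤ)) • ((-(eqK y z x)) • Nv y z x + (eqT y z x) • Bv y z ε x)

/-- `Q₃ = ρ⁻⁴·[(2𝒦² + 𝒯² − 𝒦°)N + (𝒯° − 3𝒦𝒯)B]`. -/
def Q3 (y z : ℝ → ℝ) (ε : ℝ) (x : ℝ) : V3 :=
  ((rho y z x) ^ (-4 : ℤ)) •
    ((2 * (eqK y z x) ^ 2 + (eqT y z x) ^ 2 - eqD y z (eqK y z) x) • Nv y z x +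
      (eqD y z (eqT y z) x - 3 * eqK y z x * eqT y z x) • Bv y z ε x)

section FourthDerivative

variable {I : Set ℝ} {y z : ℝ → ℝ} {ε : ℝ}

lemma deriv_triple {f g h : ℝ → ℝ} (hf : Differentiable ℝ f) (hg : Differentiable ℝ g)
    (hh : Differentiable ℝ h) :
    deriv (fun t => ((f t, g t, h t) : V3)) = fun t => (deriv f t, deriv g t, deriv h t) :=
  funext fun t => ((hf t).hasDerivAt.prodMk ((hg t).hasDerivAt.prodMk (hh t).hasDerivAt)).deriv

lemma ContDiff.deriv_top {f : ℝ → ℝ} (hf : ContDiff ℝ (⊤ : ℕ∞) f) :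
    ContDiff ℝ (⊤ : ℕ∞) (deriv f) :=
  (contDiff_infty_iff_deriv.1 hf).2

lemma curv_eq_sqrt (hε : ε = 1 ∨ ε = -1) {x : ℝ}
    (hx : 0 < ε * ((deriv (deriv y) x) ^ 2 - (deriv (deriv z) x) ^ 2)) :
    curv y z x = √(ε * ((deriv (deriv y) x) ^ 2 - (deriv (deriv z) x) ^ 2)) := by
  unfold curv
  rw [← abs_of_pos hx, abs_mul]
  rcases hε with rfl | rfl <;> simp

lemma contDiffOn_curv (hy : ContDiff ℝ (⊤ : ℕ∞) y) (hz : ContDiff ℝ (⊤ : ℕ∞) z)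
    (hε : ε = 1 ∨ ε = -1)
    (hsign : ∀ x ∈ I, 0 < ε * ((deriv (deriv y) x) ^ 2 - (deriv (deriv z) x) ^ 2)) :
    ContDiffOn ℝ (⊤ : ℕ∞) (curv y z) I := by
  have hr : ContDiff ℝ (⊤ : ℕ∞)
      fun t => ε * ((deriv (deriv y) t) ^ 2 - (deriv (deriv z) t) ^ 2) :=
    contDiff_const.mul ((hy.deriv_top.deriv_top.pow 2).sub (hz.deriv_top.deriv_top.pow 2))
  exact (hr.contDiffOn.sqrt fun t ht => (hsign t ht).ne').congr
    fun t ht => curv_eq_sqrt hε (hsign t ht)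

lemma curv_pos {x : ℝ} (hx : (deriv (deriv y) x) ^ 2 - (deriv (deriv z) x) ^ 2 ≠ 0) :
    0 < curv y z x :=
  Real.sqrt_pos.2 (abs_pos.2 hx)

lemma contDiffOn_rho (hy : ContDiff ℝ (⊤ : ℕ∞) y) (hz : ContDiff ℝ (⊤ : ℕ∞) z)
    (hadm : ∀ x ∈ I, (deriv (deriv y) x) ^ 2 - (deriv (deriv z) x) ^ 2 ≠ 0)
    (hε : ε = 1 ∨ ε = -1)
    (hsign : ∀ x ∈ I, 0 < ε * ((deriv (deriv y) x) ^ 2 - (deriv (deriv z) x) ^ 2)) :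
    ContDiffOn ℝ (⊤ : ℕ∞) (rho y z) I :=
  contDiffOn_const.div (contDiffOn_curv hy hz hε hsign) fun x hx => (curv_pos (hadm x hx)).ne'

lemma contDiffOn_eqT (hy : ContDiff ℝ (⊤ : ℕ∞) y) (hz : ContDiff ℝ (⊤ : ℕ∞) z)
    (hadm : ∀ x ∈ I, (deriv (deriv y) x) ^ 2 - (deriv (deriv z) x) ^ 2 ≠ 0)
    (hε : ε = 1 ∨ ε = -1)
    (hsign : ∀ x ∈ I, 0 < ε * ((deriv (deriv y) x) ^ 2 - (deriv (deriv z) x) ^ 2)) :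
    ContDiffOn ℝ (⊤ : ℕ∞) (eqT y z) I := by
  have hy2 := hy.deriv_top.deriv_top
  have hz2 := hz.deriv_top.deriv_top
  exact (contDiffOn_rho hy hz hadm hε hsign).mul
    (((hy2.mul hz2.deriv_top).sub (hy2.deriv_top.mul hz2)).contDiffOn.div
      ((contDiffOn_curv hy hz hε hsign).pow 2) fun x hx => (pow_pos (curv_pos (hadm x hx)) 2).ne')

/-- The components of `γ''' = ρ⁻³(−𝒦N + 𝒯B)`, with denominators cleared. -/
lemma rho_mul_third_deriv (hI : IsOpen I) (hy : ContDiff ℝ (⊤ : ℕ∞) y)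
    (hz : ContDiff ℝ (⊤ : ℕ∞) z)
    (hadm : ∀ x ∈ I, (deriv (deriv y) x) ^ 2 - (deriv (deriv z) x) ^ 2 ≠ 0)
    (hε : ε = 1 ∨ ε = -1)
    (hsign : ∀ x ∈ I, 0 < ε * ((deriv (deriv y) x) ^ 2 - (deriv (deriv z) x) ^ 2))
    {x : ℝ} (hx : x ∈ I) :
    rho y z x * deriv (deriv (deriv y)) x =
        -eqK y z x * deriv (deriv y) x + ε * (eqT y z x * deriv (deriv z) x) ∧
      rho y z x * deriv (deriv (deriv z)) x =
        -eqK y z x * deriv (deriv z) x + ε * (eqT y z x * deriv (deriv y) x) := by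
  have hκ := curv_pos (hadm x hx)
  have hp := (hy.deriv_top.deriv_top.differentiable (by simp) x).hasDerivAt
  have hq := (hz.deriv_top.deriv_top.differentiable (by simp) x).hasDerivAt
  have hκ' := (((contDiffOn_curv hy hz hε hsign).contDiffAt (hI.mem_nhds hx)).differentiableAt
    (by simp)).hasDerivAt
  have hsq : ∀ t ∈ I, curv y z t ^ 2 =
      ε * ((deriv (deriv y) t) ^ 2 - (deriv (deriv z) t) ^ 2) := fun t ht => by
    rw [curv_eq_sqrt hε (hsign t ht), Real.sq_sqrt (hsign t ht).le]
  have hdsq := (hκ'.pow 2).unique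
    ((((hp.pow 2).sub (hq.pow 2)).const_mul ε).congr_of_eventuallyEq
      (Filter.eventually_of_mem (hI.mem_nhds hx) hsq))
  have hK : eqK y z x = -deriv (curv y z) x / curv y z x ^ 2 := by
    have : rho y z = (curv y z)⁻¹ := funext fun t => one_div _
    rw [eqK, this, (hκ'.inv hκ.ne').deriv]
  have hsqx := hsq x hx
  rw [hK, eqT, tors, rho]
  generalize curv y z x = k at *
  generalize deriv (curv y z) x = k' at *
  generalize deriv (deriv (deriv y)) x = p' at *
  generalize deriv (deriv (deriv z)) x = q' at *
  generalize deriv (deriv y) x = p at *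
  generalize deriv (deriv z) x = q at *
  norm_num at hdsq
  constructor
  · field_simp
    linear_combination p' * hsqx - p * hdsq / 2
  · field_simp
    linear_combination q' * hsqx - q * hdsq / 2

/-- Differentiating `ρ p' = −𝒦p + ε𝒯q` once more and eliminating first derivatives. -/
lemma sq_mul_second_deriv {ρ p q K T : ℝ → ℝ} {x p₂ K' T' : ℝ} (hε : ε = 1 ∨ ε = -1)
    (hp : ∀ᶠ t in nhds x, ρ t * deriv p t = -K t * p t + ε * (T t * q t))
    (hq : ρ x * deriv q x = -K x * q x + ε * (T x * p x))
    (hρ : HasDerivAt ρ (K x) x) (hp₁ : HasDerivAt p (deriv p x) x)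
    (hq₁ : HasDerivAt q (deriv q x) x) (hp₂ : HasDerivAt (deriv p) p₂ x)
    (hK : HasDerivAt K K' x) (hT : HasDerivAt T T' x) :
    ρ x ^ 2 * p₂ = (2 * K x ^ 2 + T x ^ 2 - ρ x * K') * p x
      + (ρ x * T' - 3 * K x * T x) * (ε * q x) := by
  have hε2 : ε ^ 2 = 1 := by rcases hε with rfl | rfl <;> norm_num
  have h := (hρ.mul hp₂).unique
    (((hK.neg.mul hp₁).add ((hT.mul hq₁).const_mul ε)).congr_of_eventuallyEq hp)
  simp only [Pi.neg_apply] at h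
  linear_combination ρ x * h - 2 * K x * hp.self_of_nhds + ε * T x * hq + T x ^ 2 * p x * hε2

end FourthDerivative

/-- the fourth arclength derivative satisfies
`γ'''' = ρ⁻⁴·[(2𝒦² + 𝒯² − 𝒦°)N + (𝒯° − 3𝒦𝒯)B]`. -/
theorem pg_fourth_derivative (I : Set ℝ) (y z : ℝ → ℝ) (ε : ℝ)
    (hI : IsOpen I) (hy : ContDiff ℝ (⊤ : ℕ∞) y) (hz : ContDiff ℝ (⊤ : ℕ∞) z)
    (hadm : ∀ x ∈ I, (deriv (deriv y) x) ^ 2 - (deriv (deriv z) x) ^ 2 ≠ 0)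
    (hε : ε = 1 ∨ ε = -1)
    (hsign : ∀ x ∈ I, 0 < ε * ((deriv (deriv y) x) ^ 2 - (deriv (deriv z) x) ^ 2)) :
    ∀ x ∈ I,
      deriv (deriv (deriv (deriv (fun t => ((t, y t, z t) : V3))))) x =
        ((rho y z x) ^ (-4 : ℤ)) •
          ((2 * (eqK y z x) ^ 2 + (eqT y z x) ^ 2 - eqD y z (eqK y z) x) • Nv y z x +
            (eqD y z (eqT y z) x - 3 * eqK y z x * eqT y z x) • Bv y z ε x) := by
  intro x hx
  have hnhds := hI.mem_nhds hx
  have hy1 := hy.deriv_top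
  have hz1 := hz.deriv_top
  have hy2 := hy1.deriv_top
  have hz2 := hz1.deriv_top
  have hy3 := hy2.deriv_top
  have hz3 := hz2.deriv_top
  have diff {f : ℝ → ℝ} (hf : ContDiff ℝ (⊤ : ℕ∞) f) : Differentiable ℝ f :=
    hf.differentiable (by simp)
  have hρ := contDiffOn_rho hy hz hadm hε hsign
  have hρ' : HasDerivAt (rho y z) (eqK y z x) x :=
    ((hρ.contDiffAt hnhds).differentiableAt (by simp)).hasDerivAt
  have hK : HasDerivAt (eqK y z) (deriv (eqK y z) x) x :=
    ((((contDiffOn_infty_iff_deriv_of_isOpen hI).1 hρ).2.contDiffAt hnhds).differentiableAt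
      (by simp)).hasDerivAt
  have hT := (((contDiffOn_eqT hy hz hadm hε hsign).contDiffAt hnhds).differentiableAt
    (by simp)).hasDerivAt
  have h3 := fun t (ht : t ∈ I) => rho_mul_third_deriv hI hy hz hadm hε hsign ht
  have hY := sq_mul_second_deriv hε (Filter.eventually_of_mem hnhds fun t ht => (h3 t ht).1)
    (h3 x hx).2 hρ' (diff hy2 x).hasDerivAt (diff hz2 x).hasDerivAt (diff hy3 x).hasDerivAt hK hT
  have hZ := sq_mul_second_deriv hε (Filter.eventually_of_mem hnhds fun t ht => (h3 t ht).2)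
    (h3 x hx).1 hρ' (diff hz2 x).hasDerivAt (diff hy2 x).hasDerivAt (diff hz3 x).hasDerivAt hK hT
  have hκ := (curv_pos (hadm x hx)).ne'
  have hγ : deriv (deriv (deriv (deriv (fun t => ((t, y t, z t) : V3))))) x =
      (0, deriv (deriv (deriv (deriv y))) x, deriv (deriv (deriv (deriv z))) x) := by
    rw [deriv_triple differentiable_fun_id (diff hy) (diff hz)]
    simp only [deriv_id'']
    rw [deriv_triple (differentiable_const _) (diff hy1) (diff hz1)]
    simp only [deriv_const]
    rw [deriv_triple (differentiable_const _) (diff hy2) (diff hz2)]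
    simp only [deriv_const]
    rw [deriv_triple (differentiable_const _) (diff hy3) (diff hz3)]
    simp only [deriv_const]
  rw [hγ]
  simp only [Nv, Bv, e2, e3, eqD, smul_eq_mul, Prod.smul_mk, Prod.mk_add_mk, Prod.mk.injEq,
    mul_zero, add_zero, true_and]
  have hrκ : rho y z x = 1 / curv y z x := rfl
  have hρ0 : rho y z x ≠ 0 := one_div_ne_zero hκ
  have hdiv (a : ℝ) : a / curv y z x = rho y z x * a := by rw [hrκ]; ring
  have hpow : rho y z x ^ (-4 : ℤ) = 1 / rho y z x ^ 4 := by
    rw [zpow_neg, one_div]; rfl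
  rw [hpow]
  simp only [hdiv]
  constructor
  · field_simp
    linear_combination hY
  · field_simp
    linear_combination hZ
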